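/- Let T = (b_T,d_T,u_T) and C = (b_C,d_C,u_C) be Subjective Logic opinions, let W = T⊛C = (b_W,d_W,u_W), and suppose the projected direction α' is none of π/2, −π/3, 2π/3. Then d_W + u_W = d_T + u_T + r_C·b_T. -/

import Mathlib

/-- A Subjective Logic opinion: belief, disbelief, uncertainty. -/
def IsOpinion (b d u : ℝ) : Prop := 0 ≤ b ∧ 0 ≤ d ∧ 0 ≤ u ∧ b + d + u = 1

/-- The direction α_O of an opinion. -/
noncomputable def alphaO (b d u : ℝ) : ℝ :=
  if b = 1 then 0 else Real.arctan (Real.sqrt 3 * u / (2 * d + u))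

/-- The angle β_O of an opinion. -/
noncomputable def betaO (b d u : ℝ) : ℝ :=
  if d = 1 then Real.pi / 3 else Real.arctan (Real.sqrt 3 * u / (2 - 2 * d - u))

/-- The angle γ_O = π/3 − β_O. -/
noncomputable def gammaO (b d u : ℝ) : ℝ := Real.pi / 3 - betaO b d u

/-- The length |OU|. -/
noncomputable def distOU (b d u : ℝ) : ℝ := Real.sqrt ((1/3) * (1 + d - u)^2 + b^2)

/-- The angle δ_O. -/
noncomputable def deltaO (b d u : ℝ) : ℝ :=
  if u = 1 then 0 else Real.arcsin (b / distOU b d u)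

/-- The angle ε_O = π − γ_O − δ_O. -/
noncomputable def epsO (b d u : ℝ) : ℝ := Real.pi - gammaO b d u - deltaO b d u

/-- Cartesian x-coordinate of an opinion. -/
noncomputable def xO (d u : ℝ) : ℝ := (2 * d + u) / Real.sqrt 3

/-- Cartesian y-coordinate of an opinion. -/
noncomputable def yO (u : ℝ) : ℝ := u

/-- x-coordinate of the point M_O. -/
noncomputable def xM (b d u : ℝ) : ℝ :=
  (2 - yO u + Real.tan (alphaO b d u) * xO d u) / (Real.tan (alphaO b d u) + Real.sqrt 3)

/-- y-coordinate of the point M_O. -/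
noncomputable def yM (b d u : ℝ) : ℝ := -Real.sqrt 3 * xM b d u + 2

/-- The ratio r_O = |BO| / |BM_O|. -/
noncomputable def rO (b d u : ℝ) : ℝ :=
  Real.sqrt (xO d u ^ 2 + yO u ^ 2) / Real.sqrt (xM b d u ^ 2 + yM b d u ^ 2)

/-- The projected direction α' = (3/π)·α_C·ε_T − β_T. -/
noncomputable def alphaProj (bT dT uT bC dC uC : ℝ) : ℝ :=
  (3 / Real.pi) * alphaO bC dC uC * epsO bT dT uT - betaO bT dT uT

/-- The maximal length |TM_{C'}|. -/
noncomputable def Lmax (bT dT uT bC dC uC : ℝ) : ℝ :=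
  if alphaProj bT dT uT bC dC uC = Real.pi / 2 then 2 * bT
  else if alphaProj bT dT uT bC dC uC = -(Real.pi / 3) then (2 / Real.sqrt 3) * uT
  else if alphaProj bT dT uT bC dC uC = 2 * Real.pi / 3 then (2 / Real.sqrt 3) * (1 - uT)
  else (2 * Real.sqrt (Real.tan (alphaProj bT dT uT bC dC uC) ^ 2 + 1)
        / |Real.tan (alphaProj bT dT uT bC dC uC) + Real.sqrt 3|) * bT

/-- The length ℓ = |TC'| = r_C·|TM_{C'}|. -/
noncomputable def lenTC (bT dT uT bC dC uC : ℝ) : ℝ :=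
  rO bC dC uC * Lmax bT dT uT bC dC uC

/-- Uncertainty of the combination W = T⊛C. -/
noncomputable def uW (bT dT uT bC dC uC : ℝ) : ℝ :=
  uT + Real.sin (alphaProj bT dT uT bC dC uC) * lenTC bT dT uT bC dC uC

/-- Disbelief of the combination W = T⊛C. -/
noncomputable def dW (bT dT uT bC dC uC : ℝ) : ℝ :=
  dT + (uT - uW bT dT uT bC dC uC) * Real.cos (Real.pi / 3)
    + Real.cos (alphaProj bT dT uT bC dC uC) * Real.sin (Real.pi / 3)
      * lenTC bT dT uT bC dC uC

/-- Belief of the combination W = T⊛C. -/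
noncomputable def bW (bT dT uT bC dC uC : ℝ) : ℝ :=
  1 - dW bT dT uT bC dC uC - uW bT dT uT bC dC uC

/-!
Seen from `T`, the direction `α'` makes the angle `α' + π/3` with the side `UD` of the opinion
triangle, on which belief is constantly zero. Hence moving a length `ℓ` in this direction lowers
belief by `ℓ * sin (α' + π/3)`, and the length `L` that reaches belief zero satisfies
`L * sin (α' + π/3) = b_T`; the claim follows by scaling with `r_C`. The direction does meet the
side: `α' + π/3 = γ_T + κ * ε_T` with `κ = 3 * α_C / π ∈ [0, 1]`, which lies between `γ_T` and
`π - δ_T`, and both `γ_T` and `δ_T` are positive as soon as `b_T` is.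
-/

section Trigonometry

open Real Set

theorem sqrt_tan_sq_add_one {x : ℝ} (hx : cos x ≠ 0) : √(tan x ^ 2 + 1) = |cos x|⁻¹ := by
  rw [add_comm, ← inv_inv (1 + tan x ^ 2), inv_one_add_tan_sq hx, sqrt_inv, sqrt_sq_eq_abs]

theorem tan_add_tan_eq_sin_add_div {x y : ℝ} (hx : cos x ≠ 0) (hy : cos y ≠ 0) :
    tan x + tan y = sin (x + y) / (cos x * cos y) := by
  rw [tan_eq_sin_div_cos, tan_eq_sin_div_cos, div_add_div _ _ hx hy, sin_add]

theorem sqrt_tan_sq_add_one_div_abs_tan_add_tan {x y : ℝ} (hx : cos x ≠ 0) (hy : cos y ≠ 0) :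
    √(tan x ^ 2 + 1) / |tan x + tan y| = |cos y| / |sin (x + y)| := by
  rw [sqrt_tan_sq_add_one hx, tan_add_tan_eq_sin_add_div hx hy, abs_div, abs_mul]
  have := abs_pos.2 hx
  field_simp

theorem sin_add_pi_div_three (x : ℝ) : sin (x + π / 3) = (sin x + √3 * cos x) / 2 := by
  rw [sin_add, cos_pi_div_three, sin_pi_div_three]
  ring

theorem cos_ne_zero_of_mem_Ioo_of_ne {x : ℝ} (hx : x ∈ Ioo (-(π / 2)) (π + π / 2))
    (hne : x ≠ π / 2) : cos x ≠ 0 := by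
  rcases hne.lt_or_gt with h | h
  · exact (cos_pos_of_mem_Ioo ⟨hx.1, h⟩).ne'
  · exact (cos_neg_of_pi_div_two_lt_of_lt h hx.2).ne

theorem two_mul_sqrt_tan_sq_add_one_div_abs_tan_add_sqrt_three {x : ℝ} (hx : cos x ≠ 0) :
    2 * √(tan x ^ 2 + 1) / |tan x + √3| = |sin (x + π / 3)|⁻¹ := by
  have hcos₃ : cos (π / 3) ≠ 0 := by simp
  rw [← tan_pi_div_three, mul_div_assoc, sqrt_tan_sq_add_one_div_abs_tan_add_tan hx hcos₃,
    cos_pi_div_three, abs_of_pos one_half_pos]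
  ring

end Trigonometry

theorem deltaO_le_pi_div_two (b d u : ℝ) : deltaO b d u ≤ Real.pi / 2 := by
  unfold deltaO
  split_ifs
  · positivity
  · exact Real.arcsin_le_pi_div_two _

namespace IsOpinion

open Real Set

variable {b d u : ℝ}

theorem alphaO_mem_Icc (h : IsOpinion b d u) : alphaO b d u ∈ Icc 0 (π / 3) := by
  obtain ⟨-, hd, hu, -⟩ := h
  unfold alphaO
  split_ifs
  · exact ⟨le_rfl, by positivity⟩
  · refine ⟨arctan_nonneg.2 (by positivity), ?_⟩
    rw [← arctan_sqrt_three]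
    refine arctan_le_arctan_iff.2 (div_le_of_le_mul₀ (by positivity) (by positivity) ?_)
    gcongr
    linarith

theorem betaO_nonneg (h : IsOpinion b d u) : 0 ≤ betaO b d u := by
  obtain ⟨hb, -, hu, hsum⟩ := h
  unfold betaO
  split_ifs
  · positivity
  · exact arctan_nonneg.2 (div_nonneg (by positivity) (by linarith))

theorem gammaO_le_pi_div_three (h : IsOpinion b d u) : gammaO b d u ≤ π / 3 :=
  sub_le_self _ h.betaO_nonneg

theorem gammaO_pos (h : IsOpinion b d u) (hb : 0 < b) : 0 < gammaO b d u := by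
  obtain ⟨-, -, hu, hsum⟩ := h
  have hd : d ≠ 1 := by linarith
  rw [gammaO, betaO, if_neg hd, sub_pos, ← arctan_sqrt_three]
  refine arctan_lt_arctan_iff.2 ((div_lt_iff₀ (by linarith)).2 ?_)
  gcongr
  linarith

theorem deltaO_pos (h : IsOpinion b d u) (hb : 0 < b) : 0 < deltaO b d u := by
  obtain ⟨-, hd, -, hsum⟩ := h
  have hu : u ≠ 1 := by linarith
  have hdist : 0 < distOU b d u := sqrt_pos.2 (by positivity)
  rw [deltaO, if_neg hu]
  exact arcsin_pos.2 (div_pos hb hdist)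

theorem epsO_nonneg (h : IsOpinion b d u) : 0 ≤ epsO b d u := by
  have hγ := h.gammaO_le_pi_div_three
  have hδ := deltaO_le_pi_div_two b d u
  unfold epsO
  linarith [pi_pos]

end IsOpinion

section Combination

open Real Set

variable {bT dT uT bC dC uC : ℝ}

theorem alphaProj_add_pi_div_three_mem_Icc (hT : IsOpinion bT dT uT) (hC : IsOpinion bC dC uC) :
    alphaProj bT dT uT bC dC uC + π / 3 ∈ Icc (gammaO bT dT uT) (π - deltaO bT dT uT) := by
  obtain ⟨hα₀, hα₁⟩ := hC.alphaO_mem_Icc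
  have hε := hT.epsO_nonneg
  have hκ : 3 / π * alphaO bC dC uC ≤ 1 := by
    rw [div_mul_eq_mul_div, div_le_one pi_pos]
    linarith
  have hγ_add : alphaProj bT dT uT bC dC uC + π / 3
      = gammaO bT dT uT + 3 / π * alphaO bC dC uC * epsO bT dT uT := by
    unfold alphaProj gammaO
    ring
  have hγ_add_ε : gammaO bT dT uT + epsO bT dT uT = π - deltaO bT dT uT := by
    unfold epsO
    ring
  rw [hγ_add, ← hγ_add_ε]
  exact ⟨le_add_of_nonneg_right (by positivity),
    add_le_add_right (mul_le_of_le_one_left hε hκ) _⟩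

theorem alphaProj_add_pi_div_three_mem_Ioo (hT : IsOpinion bT dT uT) (hC : IsOpinion bC dC uC)
    (hb : 0 < bT) : alphaProj bT dT uT bC dC uC + π / 3 ∈ Ioo 0 π := by
  obtain ⟨hγ, hδ⟩ := alphaProj_add_pi_div_three_mem_Icc hT hC
  exact ⟨(hT.gammaO_pos hb).trans_le hγ, hδ.trans_lt (sub_lt_self _ (hT.deltaO_pos hb))⟩

theorem Lmax_zero_mul_sin (dT uT bC dC uC : ℝ) :
    Lmax 0 dT uT bC dC uC * sin (alphaProj 0 dT uT bC dC uC + π / 3) = 0 := by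
  unfold Lmax
  split_ifs with _ hlow hhigh
  · simp
  · simp [hlow]
  · rw [hhigh, show 2 * π / 3 + π / 3 = π by ring, sin_pi, mul_zero]
  · simp

theorem Lmax_mul_sin (hT : IsOpinion bT dT uT) (hC : IsOpinion bC dC uC) :
    Lmax bT dT uT bC dC uC * sin (alphaProj bT dT uT bC dC uC + π / 3) = bT := by
  obtain rfl | hb := hT.1.eq_or_lt
  · exact Lmax_zero_mul_sin dT uT bC dC uC
  have hmem := alphaProj_add_pi_div_three_mem_Ioo hT hC hb
  have hsin := sin_pos_of_mem_Ioo hmem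
  unfold Lmax
  split_ifs with hvert hlow hhigh
  · rw [hvert, sin_add_pi_div_three, sin_pi_div_two, cos_pi_div_two]
    ring
  · exact absurd hmem.1 (by simp [hlow])
  · exact absurd hmem.2 (by linarith)
  · have hcos : cos (alphaProj bT dT uT bC dC uC) ≠ 0 :=
      cos_ne_zero_of_mem_Ioo_of_ne ⟨by linarith [hmem.1, pi_pos], by linarith [hmem.2, pi_pos]⟩
        hvert
    rw [two_mul_sqrt_tan_sq_add_one_div_abs_tan_add_sqrt_three hcos, abs_of_pos hsin,
      mul_right_comm, inv_mul_cancel₀ hsin.ne', one_mul]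

theorem dW_add_uW (bT dT uT bC dC uC : ℝ) :
    dW bT dT uT bC dC uC + uW bT dT uT bC dC uC
      = dT + uT + lenTC bT dT uT bC dC uC * sin (alphaProj bT dT uT bC dC uC + π / 3) := by
  rw [dW, uW, cos_pi_div_three, sin_pi_div_three, sin_add_pi_div_three]
  ring

end Combination

theorem stmt12_general {bT dT uT bC dC uC : ℝ}
    (hT : IsOpinion bT dT uT) (hC : IsOpinion bC dC uC) :
    dW bT dT uT bC dC uC + uW bT dT uT bC dC uC = dT + uT + rO bC dC uC * bT := by
  rw [dW_add_uW, lenTC, mul_assoc, Lmax_mul_sin hT hC]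

/-- If the projected direction α' is none of π/2, −π/3, 2π/3, then the combination
W = T⊛C satisfies d_W + u_W = d_T + u_T + r_C·b_T. -/
theorem stmt12 (bT dT uT bC dC uC : ℝ)
    (hT : IsOpinion bT dT uT) (hC : IsOpinion bC dC uC)
    (h1 : alphaProj bT dT uT bC dC uC ≠ Real.pi / 2)
    (h2 : alphaProj bT dT uT bC dC uC ≠ -(Real.pi / 3))
    (h3 : alphaProj bT dT uT bC dC uC ≠ 2 * Real.pi / 3) :
    dW bT dT uT bC dC uC + uW bT dT uT bC dC uC = dT + uT + rO bC dC uC * bT :=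
  stmt12_general hT hC
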